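/- Let X ∈ {E,A}. For every normal logic program P: Cnˣ_og(τ^∨_EH(P)) = Cnˣ_og(τ_EH(P)) = Cnˣ_og(τ_EB(P)), Cnˣ_og(τ^∨_EB(P)) = Cnˣ_og(τ^∨_HP(P)), Cnˣ_og(τ_EB(P)) ⊆ Cnˣ_og(τ_HP(P)), and Cnˣ_og(τ_HP(P)) ⊆ Cnˣ_og(τ^∨_HP(P)). Moreover, for each pair of embeddings for which no inclusion follows from these relations by reflexivity and transitivity, there exists a normal program for which the inclusion of the corresponding sets of objective ground consequences fails. -/

import Mathlib

set_option autoImplicit false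

/-! # First-order autoepistemic logic (FO-AEL): syntax -/

structure Sig : Type 1 where
  Func : Type
  Pred : Type
  arF : Func → ℕ
  arP : Pred → ℕ

inductive Term (S : Sig) : Type
  | var : ℕ → Term S
  | func : (f : S.Func) → (Fin (S.arF f) → Term S) → Term S

inductive Formula (S : Sig) : Type
  | atom : (p : S.Pred) → (Fin (S.arP p) → Term S) → Formula S
  | eq : Term S → Term S → Formula S
  | not : Formula S → Formula S
  | and : Formula S → Formula S → Formula S
  | ex : ℕ → Formula S → Formula S
  | box : Formula S → Formula S

namespace Term

variable {S : Sig}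

/-- A term is ground if it contains no variables; ground terms are the *names*. -/
def isGround : Term S → Prop
  | var _ => False
  | func _ ts => ∀ i, (ts i).isGround

def hasVar (x : ℕ) : Term S → Prop
  | var y => y = x
  | func _ ts => ∃ i, (ts i).hasVar x

/-- Application of a partial (name) substitution to a term. -/
def subst (β : ℕ → Option (Term S)) : Term S → Term S
  | var x => (β x).getD (var x)
  | func f ts => func f (fun i => (ts i).subst β)

/-- The function symbols occurring in a term. -/
def funcs : Term S → Set S.Func
  | var _ => ∅
  | func f ts => insert f (⋃ i, (ts i).funcs)

/-- `t` is a name (ground term) over the set `F` of function symbols. -/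
def isNameOf (F : Set S.Func) : Term S → Prop
  | var _ => False
  | func f ts => f ∈ F ∧ ∀ i, (ts i).isNameOf F

end Term

namespace Formula

variable {S : Sig}

/-- A formula is objective if it is 𝖫-free. -/
def isObjective : Formula S → Prop
  | atom _ _ => True
  | eq _ _ => True
  | not φ => φ.isObjective
  | and φ ψ => φ.isObjective ∧ ψ.isObjective
  | ex _ φ => φ.isObjective
  | box _ => False

def isGround : Formula S → Prop
  | atom _ ts => ∀ i, (ts i).isGround
  | eq t₁ t₂ => t₁.isGround ∧ t₂.isGround
  | not φ => φ.isGround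
  | and φ ψ => φ.isGround ∧ ψ.isGround
  | ex _ _ => False
  | box φ => φ.isGround

def isAtomic : Formula S → Prop
  | atom _ _ => True
  | eq _ _ => True
  | not _ => False
  | and _ _ => False
  | ex _ _ => False
  | box _ => False

/-- The modal operator 𝖫 occurs only applied to (objective) atomic formulas. -/
def boxAtomic : Formula S → Prop
  | atom _ _ => True
  | eq _ _ => True
  | not φ => φ.boxAtomic
  | and φ ψ => φ.boxAtomic ∧ ψ.boxAtomic
  | ex _ φ => φ.boxAtomic
  | box φ => φ.isAtomic

/-- Propositional formulas: built from 0-ary predicates only. -/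
def isPropositional : Formula S → Prop
  | atom p _ => S.arP p = 0
  | eq _ _ => False
  | not φ => φ.isPropositional
  | and φ ψ => φ.isPropositional ∧ ψ.isPropositional
  | ex _ _ => False
  | box _ => False

def freeIn (x : ℕ) : Formula S → Prop
  | atom _ ts => ∃ i, (ts i).hasVar x
  | eq t₁ t₂ => t₁.hasVar x ∨ t₂.hasVar x
  | not φ => φ.freeIn x
  | and φ ψ => φ.freeIn x ∨ ψ.freeIn x
  | ex y φ => x ≠ y ∧ φ.freeIn x
  | box φ => φ.freeIn x

/-- A formula is closed (a sentence) if it has no free variables. -/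
def closed (φ : Formula S) : Prop := ∀ x, ¬ φ.freeIn x

/-- Capture-avoiding application of a partial name substitution (values are ground). -/
def subst (β : ℕ → Option (Term S)) : Formula S → Formula S
  | atom p ts => atom p (fun i => (ts i).subst β)
  | eq t₁ t₂ => eq (t₁.subst β) (t₂.subst β)
  | not φ => not (φ.subst β)
  | and φ ψ => and (φ.subst β) (ψ.subst β)
  | ex y φ => ex y (φ.subst (fun z => if z = y then none else β z))
  | box φ => box (φ.subst β)

def funcs : Formula S → Set S.Func
  | atom _ ts => ⋃ i, (ts i).funcs
  | eq t₁ t₂ => t₁.funcs ∪ t₂.funcs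
  | not φ => φ.funcs
  | and φ ψ => φ.funcs ∪ ψ.funcs
  | ex _ φ => φ.funcs
  | box φ => φ.funcs

def preds : Formula S → Set S.Pred
  | atom p _ => {p}
  | eq _ _ => ∅
  | not φ => φ.preds
  | and φ ψ => φ.preds ∪ ψ.preds
  | ex _ φ => φ.preds
  | box φ => φ.preds

/-- `φ ∨ ψ` as an abbreviation: `¬(¬φ ∧ ¬ψ)`. -/
def or (φ ψ : Formula S) : Formula S := not (and (not φ) (not ψ))

/-- `φ ⊃ ψ` as an abbreviation: `¬(φ ∧ ¬ψ)`. -/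
def imp (φ ψ : Formula S) : Formula S := not (and φ (not ψ))

/-- `∀x.φ` as an abbreviation: `¬∃x.¬φ`. -/
def all (x : ℕ) (φ : Formula S) : Formula S := not (ex x (not φ))

end Formula

/-! ## Semantics -/

structure Interp (S : Sig) where
  U : Type
  nonempty : Nonempty U
  interpF : (f : S.Func) → (Fin (S.arF f) → U) → U
  interpP : (p : S.Pred) → (Fin (S.arP p) → U) → Prop

noncomputable def Interp.dflt {S : Sig} (w : Interp S) : w.U := Classical.choice w.nonempty

def Term.eval {S : Sig} (w : Interp S) (B : ℕ → w.U) : Term S → w.U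
  | Term.var x => B x
  | Term.func f ts => w.interpF f (fun i => (ts i).eval w B)

/-- Evaluation of a ground term (the assignment is irrelevant). -/
noncomputable def Term.evalG {S : Sig} (w : Interp S) (t : Term S) : w.U :=
  t.eval w (fun _ => w.dflt)

/-- An individual is named if some name (ground term) denotes it. -/
def IsNamed {S : Sig} (w : Interp S) (k : w.U) : Prop :=
  ∃ t : Term S, t.isGround ∧ Term.evalG w t = k

/-- A name substitution `β` is associated with the variable assignment `B`:
its domain is exactly the set of variables whose `B`-value is named, and
it assigns to each such variable a name denoting its `B`-value. -/
def Assoc {S : Sig} (w : Interp S) (B : ℕ → w.U) (β : ℕ → Option (Term S)) : Prop :=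
  ∀ x : ℕ,
    (IsNamed w (B x) → (β x).isSome) ∧
    (∀ t : Term S, β x = some t → t.isGround ∧ Term.evalG w t = B x)

/-- The two semantics: any-name (E) and all-name (A). -/
inductive Sem : Type
  | any
  | all

/-- Satisfaction of a formula in an autoepistemic interpretation `⟨w,Γ⟩`
under a variable assignment, for the any-name (E) resp. all-name (A) semantics. -/
def Sat {S : Sig} (X : Sem) (w : Interp S) (Γ : Set (Formula S)) :
    Formula S → (ℕ → w.U) → Prop
  | Formula.atom p ts, B => w.interpP p (fun i => (ts i).eval w B)
  | Formula.eq t₁ t₂, B => t₁.eval w B = t₂.eval w B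
  | Formula.not φ, B => ¬ Sat X w Γ φ B
  | Formula.and φ ψ, B => Sat X w Γ φ B ∧ Sat X w Γ ψ B
  | Formula.ex x φ, B => ∃ u : w.U, Sat X w Γ φ (Function.update B x u)
  | Formula.box φ, B =>
      match X with
      | Sem.any => ∃ β, Assoc w B β ∧ (φ.subst β).closed ∧ φ.subst β ∈ Γ
      | Sem.all => ∀ β, Assoc w B β → (φ.subst β).closed ∧ φ.subst β ∈ Γ

def ModelsF {S : Sig} (X : Sem) (w : Interp S) (Γ : Set (Formula S)) (φ : Formula S) : Prop :=
  ∀ B : ℕ → w.U, Sat X w Γ φ B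

def ModelsT {S : Sig} (X : Sem) (w : Interp S) (Γ Φ : Set (Formula S)) : Prop :=
  ∀ φ ∈ Φ, ModelsF X w Γ φ

/-- `Φ ⊨ˣ_Γ φ`. -/
def Entails {S : Sig} (X : Sem) (Φ Γ : Set (Formula S)) (φ : Formula S) : Prop :=
  ∀ w : Interp S, ModelsT X w Γ Φ → ModelsF X w Γ φ

/-- The standard names assumption: all names are interpreted distinctly
and every individual is named. -/
def SNA {S : Sig} (w : Interp S) : Prop :=
  (∀ t₁ t₂ : Term S, t₁.isGround → t₂.isGround → Term.evalG w t₁ = Term.evalG w t₂ → t₁ = t₂) ∧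
  (∀ k : w.U, IsNamed w k)

/-- Entailment restricted to interpretations satisfying the standard names assumption. -/
def EntailsSN {S : Sig} (X : Sem) (Φ Γ : Set (Formula S)) (φ : Formula S) : Prop :=
  ∀ w : Interp S, SNA w → ModelsT X w Γ Φ → ModelsF X w Γ φ

/-- `T` is a stableˣ expansion of `Φ`. -/
def StableExp {S : Sig} (X : Sem) (Φ T : Set (Formula S)) : Prop :=
  T = {φ | Entails X Φ T φ}

def objOf {S : Sig} (T : Set (Formula S)) : Set (Formula S) :=
  {φ ∈ T | φ.isObjective}

def ogOf {S : Sig} (T : Set (Formula S)) : Set (Formula S) :=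
  {φ ∈ T | φ.isObjective ∧ φ.isGround}

def ogaOf {S : Sig} (T : Set (Formula S)) : Set (Formula S) :=
  {φ ∈ T | φ.isObjective ∧ φ.isGround ∧ φ.isAtomic}

def Consistent {S : Sig} (T : Set (Formula S)) : Prop := T ≠ Set.univ

/-- `Φ₁ ≡ˣ Φ₂`: same stableˣ expansions. -/
def ExpEquiv {S : Sig} (X : Sem) (Φ₁ Φ₂ : Set (Formula S)) : Prop :=
  ∀ T, StableExp X Φ₁ T ↔ StableExp X Φ₂ T

/-- `Φ₁ ≡ˣ_γ Φ₂` for a selector `sel` (e.g. `ogaOf`): the stableˣ expansions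
correspond with respect to `sel`. -/
def ExpEquivSel {S : Sig} (X : Sem) (sel : Set (Formula S) → Set (Formula S))
    (Φ₁ Φ₂ : Set (Formula S)) : Prop :=
  (∀ T, StableExp X Φ₁ T → ∃ T', StableExp X Φ₂ T' ∧ sel T = sel T') ∧
  (∀ T', StableExp X Φ₂ T' → ∃ T, StableExp X Φ₁ T ∧ sel T = sel T')

/-- Autoepistemicˣ consequences of `Φ`. -/
def Cn {S : Sig} (X : Sem) (Φ : Set (Formula S)) : Set (Formula S) :=
  {φ | ∀ T, StableExp X Φ T → φ ∈ T}

def CnO {S : Sig} (X : Sem) (Φ : Set (Formula S)) : Set (Formula S) :=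
  {φ ∈ Cn X Φ | φ.isObjective}

def CnOg {S : Sig} (X : Sem) (Φ : Set (Formula S)) : Set (Formula S) :=
  {φ ∈ Cn X Φ | φ.isObjective ∧ φ.isGround}

/-! ## Logic programs -/

structure PAtom (S : Sig) where
  p : S.Pred
  args : Fin (S.arP p) → Term S

namespace PAtom

variable {S : Sig}

def toFormula (a : PAtom S) : Formula S := Formula.atom a.p a.args

def isGround (a : PAtom S) : Prop := ∀ i, (a.args i).isGround

def hasVar (x : ℕ) (a : PAtom S) : Prop := ∃ i, (a.args i).hasVar x

def substA (σ : ℕ → Term S) (a : PAtom S) : PAtom S :=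
  ⟨a.p, fun i => (a.args i).subst (fun x => some (σ x))⟩

def funcs (a : PAtom S) : Set S.Func := ⋃ i, (a.args i).funcs

end PAtom

/-- A (disjunctive) rule `h₁ | … | h_l ← b₁,…,b_m, not c₁,…,not c_n`,
together with a list of the variables occurring in it. -/
structure Rule (S : Sig) where
  head : List (PAtom S)
  pos : List (PAtom S)
  neg : List (PAtom S)
  vars : List ℕ

namespace Rule

variable {S : Sig}

def atoms (r : Rule S) : List (PAtom S) := r.head ++ r.pos ++ r.neg

def hasVar (x : ℕ) (r : Rule S) : Prop := ∃ a ∈ r.atoms, PAtom.hasVar x a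

/-- Well-formedness: at least one head atom, and `vars` lists all variables of the rule. -/
def wf (r : Rule S) : Prop := r.head ≠ [] ∧ ∀ x, r.hasVar x → x ∈ r.vars

def isNormal (r : Rule S) : Prop := r.head.length = 1

def isGround (r : Rule S) : Prop := (∀ a ∈ r.atoms, a.isGround) ∧ r.vars = []

def isSafe (r : Rule S) : Prop := ∀ x, r.hasVar x → ∃ a ∈ r.pos, PAtom.hasVar x a

def isPositive (r : Rule S) : Prop := r.neg = []

def applySubst (σ : ℕ → Term S) (r : Rule S) : Rule S :=
  ⟨r.head.map (PAtom.substA σ), r.pos.map (PAtom.substA σ), r.neg.map (PAtom.substA σ), []⟩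

end Rule

abbrev Program (S : Sig) := Set (Rule S)

def progWf {S : Sig} (P : Program S) : Prop := ∀ r ∈ P, r.wf
def progNormal {S : Sig} (P : Program S) : Prop := ∀ r ∈ P, r.isNormal
def progGround {S : Sig} (P : Program S) : Prop := ∀ r ∈ P, r.isGround
def progSafe {S : Sig} (P : Program S) : Prop := ∀ r ∈ P, r.isSafe
def progPositive {S : Sig} (P : Program S) : Prop := ∀ r ∈ P, r.isPositive

/-- The function symbols occurring in `P` (part of the signature `Σ_P`). -/
def progFuncs {S : Sig} (P : Program S) : Set S.Func :=
  {f | ∃ r ∈ P, ∃ a ∈ r.atoms, f ∈ a.funcs}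

/-- The predicate symbols occurring in `P` (part of the signature `Σ_P`). -/
def progPreds {S : Sig} (P : Program S) : Set S.Pred :=
  {q | ∃ r ∈ P, ∃ a ∈ r.atoms, a.p = q}

/-- The ambient signature is exactly the signature `Σ_P` of `P`. -/
def fullSig {S : Sig} (P : Program S) : Prop :=
  (∀ f : S.Func, f ∈ progFuncs P) ∧ (∀ q : S.Pred, q ∈ progPreds P)

/-- Standing assumption: `Σ_P` contains a 0-ary function symbol whenever it
has a predicate symbol of arity greater than 0. -/
def goodSig {S : Sig} (P : Program S) : Prop :=
  (∃ q ∈ progPreds P, 0 < S.arP q) → ∃ f ∈ progFuncs P, S.arF f = 0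

/-! ## Embeddings of logic programs into FO-AEL -/

def andAll {S : Sig} : Formula S → List (Formula S) → Formula S
  | φ, [] => φ
  | φ, ψ :: rest => andAll (Formula.and φ ψ) rest

def orAll {S : Sig} : Formula S → List (Formula S) → Formula S
  | φ, [] => φ
  | φ, ψ :: rest => orAll (Formula.or φ ψ) rest

/-- `impOf ants c` is `⋀ ants ⊃ c` (just `c` if there are no antecedents). -/
def impOf {S : Sig} : List (Formula S) → Formula S → Formula S
  | [], c => c
  | a :: rest, c => Formula.imp (andAll a rest) c

/-- Disjunction of a nonempty list (junk value on the empty list,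
which is excluded by rule well-formedness). -/
def disjOf {S : Sig} : List (Formula S) → Formula S
  | [] => Formula.eq (Term.var 0) (Term.var 0)
  | h :: rest => orAll h rest

/-- Universal uclosure over the listed variables. -/
def uclosure {S : Sig} (vs : List ℕ) (φ : Formula S) : Formula S :=
  vs.foldr Formula.all φ

def bodyHP {S : Sig} (r : Rule S) : List (Formula S) :=
  r.pos.map PAtom.toFormula ++ r.neg.map (fun c => Formula.not (Formula.box c.toFormula))

def bodyE {S : Sig} (r : Rule S) : List (Formula S) :=
  r.pos.map (fun b => Formula.and b.toFormula (Formula.box b.toFormula)) ++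
    r.neg.map (fun c => Formula.not (Formula.box c.toFormula))

/-- `τ_HP(r)` resp. `τ^∨_HP(r)`. -/
def embHP {S : Sig} (r : Rule S) : Formula S :=
  uclosure r.vars (impOf (bodyHP r) (disjOf (r.head.map PAtom.toFormula)))

/-- `τ_EB(r)` resp. `τ^∨_EB(r)`. -/
def embEB {S : Sig} (r : Rule S) : Formula S :=
  uclosure r.vars (impOf (bodyE r) (disjOf (r.head.map PAtom.toFormula)))

/-- `τ_EH(r)` resp. `τ^∨_EH(r)`. -/
def embEH {S : Sig} (r : Rule S) : Formula S :=
  uclosure r.vars (impOf (bodyE r)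
    (disjOf (r.head.map (fun h => Formula.and h.toFormula (Formula.box h.toFormula)))))

/-- The unique-names axioms `¬𝖫(t₁=t₂) ⊃ t₁≠t₂` for distinct names of `Σ_P`. -/
def UNAax {S : Sig} (P : Program S) : Set (Formula S) :=
  {φ | ∃ t₁ t₂ : Term S, t₁.isNameOf (progFuncs P) ∧ t₂.isNameOf (progFuncs P) ∧ t₁ ≠ t₂ ∧
        φ = Formula.imp (Formula.not (Formula.box (Formula.eq t₁ t₂)))
              (Formula.not (Formula.eq t₁ t₂))}

/-- The positive introspection axioms `α ⊃ 𝖫α` for objective ground atoms of `Σ_P`. -/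
def PIAax {S : Sig} (P : Program S) : Set (Formula S) :=
  {φ | ∃ a : PAtom S, a.p ∈ progPreds P ∧ (∀ i, (a.args i).isNameOf (progFuncs P)) ∧
        φ = Formula.imp a.toFormula (Formula.box a.toFormula)}

def ruleEmb {S : Sig} (emb : Rule S → Formula S) (P : Program S) : Set (Formula S) :=
  {φ | ∃ r ∈ P, φ = emb r}

def tauHP {S : Sig} (P : Program S) : Set (Formula S) := ruleEmb embHP P ∪ UNAax P
def tauEB {S : Sig} (P : Program S) : Set (Formula S) := ruleEmb embEB P ∪ UNAax P
def tauEH {S : Sig} (P : Program S) : Set (Formula S) := ruleEmb embEH P ∪ UNAax P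
def tauHPv {S : Sig} (P : Program S) : Set (Formula S) := ruleEmb embHP P ∪ PIAax P ∪ UNAax P
def tauEBv {S : Sig} (P : Program S) : Set (Formula S) := ruleEmb embEB P ∪ PIAax P ∪ UNAax P
def tauEHv {S : Sig} (P : Program S) : Set (Formula S) := ruleEmb embEH P ∪ UNAax P
def tauHPminus {S : Sig} (P : Program S) : Set (Formula S) := ruleEmb embHP P
def tauEHvminus {S : Sig} (P : Program S) : Set (Formula S) := ruleEmb embEH P

/-! ## Grounding and stable models -/

/-- The grounding of `P`: all ground instantiations of rules of `P`
obtained by replacing variables with names of `Σ_P`. -/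
def grP {S : Sig} (P : Program S) : Program S :=
  {r' | ∃ r ∈ P, ∃ σ : ℕ → Term S,
        (∀ x, r.hasVar x → (σ x).isNameOf (progFuncs P)) ∧ r' = Rule.applySubst σ r}

/-- A Herbrand interpretation: a set of ground atomic formulas. -/
def HerbrandI {S : Sig} (M : Set (Formula S)) : Prop :=
  ∀ φ ∈ M, φ.isAtomic ∧ φ.isGround

/-- `M` is a Herbrand model of the positive ground program `Q` (relative to the
names of `Σ_P`): rules are satisfied and `t = t ∈ M` for every name `t`. -/
def HerbrandModelOf {S : Sig} (P Q : Program S) (M : Set (Formula S)) : Prop :=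
  HerbrandI M ∧
  (∀ r ∈ Q, (∀ b ∈ r.pos, PAtom.toFormula b ∈ M) → ∃ h ∈ r.head, PAtom.toFormula h ∈ M) ∧
  (∀ t : Term S, t.isNameOf (progFuncs P) → Formula.eq t t ∈ M)

/-- The Gelfond–Lifschitz reduct of `gr(P)` with respect to `M`. -/
def reduct {S : Sig} (P : Program S) (M : Set (Formula S)) : Program S :=
  {r' | ∃ r ∈ grP P, (∀ c ∈ r.neg, PAtom.toFormula c ∉ M) ∧
        r' = ⟨r.head, r.pos, [], r.vars⟩}

/-- `M` is a stable model of `P`: a minimal Herbrand model of the reduct of `gr(P)` w.r.t. `M`. -/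
def isStableModel {S : Sig} (P : Program S) (M : Set (Formula S)) : Prop :=
  HerbrandModelOf P (reduct P M) M ∧
  ∀ M', M' ⊆ M → HerbrandModelOf P (reduct P M) M' → M' = M

/-! ## First-order theories and classes thereof -/

/-- An FO theory: a set of objective sentences. -/
def FOTheory {S : Sig} (Φ : Set (Formula S)) : Prop :=
  ∀ φ ∈ Φ, φ.isObjective ∧ φ.closed

def theoryFuncs {S : Sig} (Φ : Set (Formula S)) : Set S.Func := {f | ∃ φ ∈ Φ, f ∈ φ.funcs}
def theoryPreds {S : Sig} (Φ : Set (Formula S)) : Set S.Pred := {q | ∃ φ ∈ Φ, q ∈ φ.preds}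

/-- The ambient signature is exactly the union of the signatures of `Φ` and `P`. -/
def CoverSig {S : Sig} (Φ : Set (Formula S)) (P : Program S) : Prop :=
  (∀ f : S.Func, f ∈ theoryFuncs Φ ∪ progFuncs P) ∧
  (∀ q : S.Pred, q ∈ theoryPreds Φ ∪ progPreds P)

def exClosure {S : Sig} (ys : List ℕ) (φ : Formula S) : Formula S := ys.foldr Formula.ex φ

/-- A Horn sentence `(∀)(b₁ ∧ … ∧ b_n ⊃ h)` with atomic `b_i`, `h`
(the consequent `h` may be absent). -/
def isHornSentence {S : Sig} (φ : Formula S) : Prop :=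
  ∃ (vs : List ℕ) (bs : List (Formula S)),
    (∀ b ∈ bs, b.isAtomic) ∧
    ((∃ h : Formula S, h.isAtomic ∧ φ = uclosure vs (impOf bs h)) ∨
     (∃ b rest, bs = b :: rest ∧ φ = uclosure vs (Formula.not (andAll b rest))))

def HornTheory {S : Sig} (Φ : Set (Formula S)) : Prop :=
  FOTheory Φ ∧ ∀ φ ∈ Φ, isHornSentence φ

/-- A generalized Horn sentence `(∀)(b₁ ∧ … ∧ b_n ⊃ ∃ȳ.h)` with atomic `b_i`, `h`,
the variables `ȳ` occurring only in `h` (the consequent may be absent). -/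
def isGHornSentence {S : Sig} (φ : Formula S) : Prop :=
  ∃ (vs : List ℕ) (bs : List (Formula S)),
    (∀ b ∈ bs, b.isAtomic) ∧
    ((∃ (ys : List ℕ) (h : Formula S), h.isAtomic ∧
        (∀ y ∈ ys, ∀ b ∈ bs, ¬ b.freeIn y) ∧
        φ = uclosure vs (impOf bs (exClosure ys h))) ∨
     (∃ b rest, bs = b :: rest ∧ φ = uclosure vs (Formula.not (andAll b rest))))

def GHornTheory {S : Sig} (Φ : Set (Formula S)) : Prop :=
  FOTheory Φ ∧ ∀ φ ∈ Φ, isGHornSentence φ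

def PropTheory {S : Sig} (Φ : Set (Formula S)) : Prop :=
  FOTheory Φ ∧ ∀ φ ∈ Φ, φ.isPropositional

/-- The six embeddings `τ_HP, τ_EB, τ_EH, τ^∨_HP, τ^∨_EB, τ^∨_EH`. -/
inductive EmbKind : Type
  | hp | eb | eh | hpv | ebv | ehv

def EmbKind.toTau {S : Sig} : EmbKind → Program S → Set (Formula S)
  | .hp => tauHP
  | .eb => tauEB
  | .eh => tauEH
  | .hpv => tauHPv
  | .ebv => tauEBv
  | .ehv => tauEHv

/-- The stated basic relations between objective ground consequence sets:
`Cn_og(EH∨) = Cn_og(EH) = Cn_og(EB)`, `Cn_og(EB∨) = Cn_og(HP∨)`,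
`Cn_og(EB) ⊆ Cn_og(HP)`, and `Cn_og(HP) ⊆ Cn_og(HP∨)`. -/
def EmbRel : EmbKind → EmbKind → Prop := fun i j =>
  (i, j) ∈ ([(.ehv, .eh), (.eh, .ehv), (.eh, .eb), (.eb, .eh),
             (.ebv, .hpv), (.hpv, .ebv), (.eb, .hp), (.hp, .hpv)] :
            List (EmbKind × EmbKind))

/-! Fix the set `G` of ground atoms that are believed. The unique-names axioms make the names denote
distinct individuals and membership in `G` decides the modal literals, so that, as far as objective
ground formulas are concerned, the models of an embedding are given by the Herbrand models of a
condition on sets of ground atoms. Stable expansions therefore correspond to the sets `G` that equal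
the intersection of the Herbrand models relative to `G`.

If the program is normal and `G` is such a set, then `G` is itself a Herbrand model and intersecting
a Herbrand model with `G` yields another one, so all six embeddings have the same sets `G`: those
which are the least model of their own reduct. It remains to compare, for a fixed `G`, the Herbrand
models of the embeddings.

The program `p ← q` separates the embeddings: its only `G` is `∅`, and relative to it every set of
atoms is a model for EB, the sets satisfying `q ⊃ p` are the models for HP, and only `∅` is a model
in the presence of positive introspection. -/

/-! ## Ground terms and the names of individuals -/

namespace Term

variable {S : Sig} {t : Term S} {β : ℕ → Option (Term S)} {w : Interp S} {B : ℕ → w.U}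

theorem isGround_iff_forall_not_hasVar : t.isGround ↔ ∀ x, ¬ t.hasVar x := by
  induction t with
  | var y => exact ⟨False.elim, fun h => h y rfl⟩
  | func f ts ih =>
    exact ⟨fun h x ⟨i, hi⟩ => (ih i).1 (h i) x hi, fun h i => (ih i).2 fun x hx => h x ⟨i, hx⟩⟩

theorem isNameOf_iff_isGround {F : Set S.Func} (hF : ∀ f, f ∈ F) :
    t.isNameOf F ↔ t.isGround := by
  induction t with
  | var y => exact Iff.rfl
  | func f ts ih => exact ⟨fun h i => (ih i).1 (h.2 i), fun h => ⟨hF f, fun i => (ih i).2 (h i)⟩⟩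

theorem subst_of_isGround (ht : t.isGround) (β : ℕ → Option (Term S)) : t.subst β = t := by
  induction t with
  | var y => exact ht.elim
  | func f ts ih => exact congrArg (func f) (funext fun i => ih i (ht i))

theorem eval_of_isGround (ht : t.isGround) (B : ℕ → w.U) : t.eval w B = t.evalG w := by
  induction t with
  | var y => exact ht.elim
  | func f ts ih => exact congrArg (w.interpF f) (funext fun i => ih i (ht i))

theorem isGround_subst (h : ∀ x, t.hasVar x → ∃ s, β x = some s ∧ s.isGround) :
    (t.subst β).isGround := by
  induction t with
  | var y =>
    obtain ⟨s, hs, hg⟩ := h y rfl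
    simpa only [subst, hs, Option.getD_some] using hg
  | func f ts ih => exact fun i => ih i fun x hx => h x ⟨i, hx⟩

theorem evalG_subst (h : ∀ x, t.hasVar x → ∃ s, β x = some s ∧ s.evalG w = B x) :
    (t.subst β).evalG w = t.eval w B := by
  induction t with
  | var y =>
    obtain ⟨s, hs, hB⟩ := h y rfl
    simpa only [subst, hs, Option.getD_some, eval] using hB
  | func f ts ih => exact congrArg (w.interpF f) (funext fun i => ih i fun x hx => h x ⟨i, hx⟩)

end Term

namespace Interp

variable {S : Sig}

/-- The term `t` is a name of the individual `u`. -/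
def Denotes (w : Interp S) (t : Term S) (u : w.U) : Prop :=
  t.isGround ∧ t.evalG w = u

/-- Distinct names denote distinct individuals: the first half of the standard names assumption. -/
def UniqueNames (w : Interp S) : Prop :=
  ∀ t t' : Term S, t.isGround → t'.isGround → t.evalG w = t'.evalG w → t = t'

/-- The Herbrand valuation of `w`: the ground atoms that are true in `w`. -/
def trueAtoms (w : Interp S) : Set (PAtom S) :=
  {a | a.isGround ∧ w.interpP a.p fun i => (a.args i).evalG w}

theorem denotes_subst {w : Interp S} {B : ℕ → w.U} {β : ℕ → Option (Term S)} {t : Term S}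
    (h : ∀ x, t.hasVar x → ∃ s, β x = some s ∧ w.Denotes s (B x)) :
    w.Denotes (t.subst β) (t.eval w B) :=
  ⟨Term.isGround_subst fun x hx => (h x hx).imp fun _ hs => ⟨hs.1, hs.2.1⟩,
    Term.evalG_subst fun x hx => (h x hx).imp fun _ hs => ⟨hs.1, hs.2.2⟩⟩

end Interp

namespace PAtom

variable {S : Sig} {a : PAtom S} {σ : ℕ → Term S}

theorem closed_toFormula (ha : a.isGround) : a.toFormula.closed :=
  fun x ⟨i, hi⟩ => Term.isGround_iff_forall_not_hasVar.1 (ha i) x hi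

theorem toFormula_injective : Function.Injective (toFormula (S := S)) := by
  rintro ⟨p, ts⟩ ⟨q, us⟩ h
  obtain ⟨rfl, hts⟩ := Formula.atom.inj h
  cases eq_of_heq hts
  rfl

theorem isGround_substA (h : ∀ x, a.hasVar x → (σ x).isGround) : (a.substA σ).isGround :=
  fun i => Term.isGround_subst fun x hx => ⟨σ x, rfl, h x ⟨i, hx⟩⟩

theorem substA_of_isGround (ha : a.isGround) (σ : ℕ → Term S) : a.substA σ = a :=
  congrArg (mk a.p) (funext fun i => Term.subst_of_isGround (ha i) _)

end PAtom

theorem Rule.isGround_substA {S : Sig} {r : Rule S} {σ : ℕ → Term S} {a : PAtom S}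
    (hσ : ∀ x, r.hasVar x → (σ x).isGround) (ha : a ∈ r.atoms) : (a.substA σ).isGround :=
  PAtom.isGround_substA fun x hx => hσ x ⟨a, ha, hx⟩

/-! ## Satisfaction of literals and connectives -/

section Satisfaction

variable {S : Sig} {X : Sem} {w : Interp S} {Γ : Set (Formula S)} {B : ℕ → w.U}

theorem sat_imp {φ ψ : Formula S} :
    Sat X w Γ (φ.imp ψ) B ↔ (Sat X w Γ φ B → Sat X w Γ ψ B) := by
  simp only [Formula.imp, Sat, not_and, not_not]

theorem sat_andAll {φ : Formula S} {l : List (Formula S)} :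
    Sat X w Γ (andAll φ l) B ↔ ∀ ψ ∈ φ :: l, Sat X w Γ ψ B := by
  induction l generalizing φ with
  | nil => simp only [andAll, List.mem_singleton, forall_eq]
  | cons ψ l ih => simp only [andAll, ih, List.forall_mem_cons, Sat, and_assoc]

theorem sat_orAll {φ : Formula S} {l : List (Formula S)} :
    Sat X w Γ (orAll φ l) B ↔ ∃ ψ ∈ φ :: l, Sat X w Γ ψ B := by
  induction l generalizing φ with
  | nil => simp only [orAll, List.mem_singleton, exists_eq_left]
  | cons ψ l ih =>
    have sat_or : Sat X w Γ (φ.or ψ) B ↔ Sat X w Γ φ B ∨ Sat X w Γ ψ B := by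
      simp only [Formula.or, Sat, or_iff_not_and_not]
    simp only [orAll, ih, List.exists_mem_cons_iff, sat_or, or_assoc]

theorem sat_impOf {l : List (Formula S)} {φ : Formula S} :
    Sat X w Γ (impOf l φ) B ↔ ((∀ ψ ∈ l, Sat X w Γ ψ B) → Sat X w Γ φ B) := by
  cases l with
  | nil => simp only [impOf, List.not_mem_nil, IsEmpty.forall_iff, implies_true, true_imp_iff]
  | cons ψ l => rw [impOf, sat_imp, sat_andAll]

theorem sat_disjOf {l : List (Formula S)} (hl : l ≠ []) :
    Sat X w Γ (disjOf l) B ↔ ∃ ψ ∈ l, Sat X w Γ ψ B := by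
  obtain ⟨φ, l, rfl⟩ := List.exists_cons_of_ne_nil hl
  exact sat_orAll

theorem modelsF_uclosure {vs : List ℕ} {φ : Formula S} :
    ModelsF X w Γ (uclosure vs φ) ↔ ModelsF X w Γ φ := by
  induction vs with
  | nil => exact Iff.rfl
  | cons x vs ih =>
    rw [← ih]
    simp only [ModelsF, uclosure, List.foldr, Formula.all, Sat, not_exists, not_not]
    exact ⟨fun h B => by simpa only [Function.update_eq_self] using h B (B x), fun h B u => h _⟩

theorem exists_assoc (w : Interp S) (B : ℕ → w.U) : ∃ β, Assoc w B β := by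
  classical
  refine ⟨fun x => if h : IsNamed w (B x) then some h.choose else none, fun x => ⟨?_, ?_⟩⟩
  · intro h
    simp only [h, dite_true, Option.isSome_some]
  · intro t ht
    obtain ⟨h, hs⟩ := Option.dite_none_right_eq_some.1 ht
    exact Option.some.inj hs ▸ h.choose_spec

theorem Assoc.exists_denotes {β : ℕ → Option (Term S)} (hβ : Assoc w B β) {x : ℕ} {s : Term S}
    (hs : w.Denotes s (B x)) : ∃ t, β x = some t ∧ w.Denotes t (B x) := by
  obtain ⟨t, ht⟩ := Option.isSome_iff_exists.1 ((hβ x).1 ⟨s, hs⟩)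
  exact ⟨t, ht, (hβ x).2 t ht⟩

theorem sat_box_iff_of_forall_assoc {φ : Formula S} {Q : Prop}
    (h : ∀ β, Assoc w B β → ((φ.subst β).closed ∧ φ.subst β ∈ Γ ↔ Q)) :
    Sat X w Γ φ.box B ↔ Q := by
  obtain ⟨β₀, hβ₀⟩ := exists_assoc w B
  cases X with
  | any => exact ⟨fun ⟨β, hβ, hφ⟩ => (h β hβ).1 hφ, fun hQ => ⟨β₀, hβ₀, (h β₀ hβ₀).2 hQ⟩⟩
  | all => exact ⟨fun hφ => (h β₀ hβ₀).1 (hφ β₀ hβ₀), fun hQ β hβ => (h β hβ).2 hQ⟩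

theorem sat_box_eq {t t' : Term S} (ht : t.isGround) (ht' : t'.isGround) :
    Sat X w Γ (Formula.eq t t').box B ↔ Formula.eq t t' ∈ Γ := by
  refine sat_box_iff_of_forall_assoc fun β _ => ?_
  simp only [Formula.subst, Term.subst_of_isGround ht, Term.subst_of_isGround ht']
  refine and_iff_right fun x hx => ?_
  exact hx.elim (Term.isGround_iff_forall_not_hasVar.1 ht x)
    (Term.isGround_iff_forall_not_hasVar.1 ht' x)

/-- The atoms in `Γ` are closed under replacing names by coreferential names in `w`. This makes the
any-name and the all-name reading of a modal atom agree. -/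
def CoreferenceClosed (w : Interp S) (Γ : Set (Formula S)) : Prop :=
  ∀ (p : S.Pred) (ts ts' : Fin (S.arP p) → Term S) (u : Fin (S.arP p) → w.U),
    (∀ i, w.Denotes (ts i) (u i)) → (∀ i, w.Denotes (ts' i) (u i)) →
      Formula.atom p ts ∈ Γ → Formula.atom p ts' ∈ Γ

theorem Interp.UniqueNames.coreferenceClosed (hw : w.UniqueNames) (Γ : Set (Formula S)) :
    CoreferenceClosed w Γ := by
  intro p ts ts' u hts hts' hΓ
  have heq : ts = ts' :=
    funext fun i => hw _ _ (hts i).1 (hts' i).1 ((hts i).2.trans (hts' i).2.symm)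
  exact heq ▸ hΓ

/-- The ground atoms that are believed according to `Γ`. -/
def believedAtoms (Γ : Set (Formula S)) : Set (PAtom S) :=
  {a | a.isGround ∧ a.toFormula ∈ Γ}

variable {σ : ℕ → Term S} {a : PAtom S}

theorem sat_toFormula (hσ : ∀ x, a.hasVar x → w.Denotes (σ x) (B x)) :
    Sat X w Γ a.toFormula B ↔ a.substA σ ∈ w.trueAtoms := by
  have hargs : ∀ i, w.Denotes ((a.substA σ).args i) ((a.args i).eval w B) :=
    fun i => Interp.denotes_subst fun x hx => ⟨σ x, rfl, hσ x ⟨i, hx⟩⟩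
  have hground : (a.substA σ).isGround := fun i => (hargs i).1
  refine Iff.trans ?_ (and_iff_right hground).symm
  simp only [PAtom.toFormula, Sat, fun i => (hargs i).2]
  rfl

theorem sat_toFormula_of_isGround (ha : a.isGround) :
    Sat X w Γ a.toFormula B ↔ a ∈ w.trueAtoms := by
  rw [sat_toFormula (σ := Term.var) fun x hx => (PAtom.closed_toFormula ha x hx).elim,
    PAtom.substA_of_isGround ha]

theorem sat_box_toFormula (hΓ : CoreferenceClosed w Γ)
    (hσ : ∀ x, a.hasVar x → w.Denotes (σ x) (B x)) :
    Sat X w Γ a.toFormula.box B ↔ a.substA σ ∈ believedAtoms Γ := by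
  refine sat_box_iff_of_forall_assoc fun β hβ => ?_
  have hσargs : ∀ i, w.Denotes ((a.substA σ).args i) ((a.args i).eval w B) :=
    fun i => Interp.denotes_subst fun x hx => ⟨σ x, rfl, hσ x ⟨i, hx⟩⟩
  have hβargs : ∀ i, w.Denotes ((a.args i).subst β) ((a.args i).eval w B) :=
    fun i => Interp.denotes_subst fun x hx => hβ.exists_denotes (hσ x ⟨i, hx⟩)
  constructor
  · rintro ⟨_, h⟩
    exact ⟨fun i => (hσargs i).1, hΓ _ _ _ _ hβargs hσargs h⟩
  · rintro ⟨_, h⟩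
    exact ⟨PAtom.closed_toFormula (a := ⟨a.p, fun i => (a.args i).subst β⟩) fun i => (hβargs i).1,
      hΓ _ _ _ _ hσargs hβargs h⟩

theorem sat_toFormula_and_box (hΓ : CoreferenceClosed w Γ)
    (hσ : ∀ x, a.hasVar x → w.Denotes (σ x) (B x)) :
    Sat X w Γ (a.toFormula.and a.toFormula.box) B ↔
      a.substA σ ∈ w.trueAtoms ∩ believedAtoms Γ :=
  and_congr (sat_toFormula hσ) (sat_box_toFormula hΓ hσ)

theorem sat_imp_box_toFormula (hΓ : CoreferenceClosed w Γ) (ha : a.isGround) :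
    Sat X w Γ (a.toFormula.imp a.toFormula.box) B ↔
      (a ∈ w.trueAtoms → a ∈ believedAtoms Γ) := by
  have hvar : ∀ x, a.hasVar x → w.Denotes (Term.var x) (B x) :=
    fun x hx => (PAtom.closed_toFormula ha x hx).elim
  rw [sat_imp, sat_toFormula_of_isGround ha, sat_box_toFormula hΓ hvar, PAtom.substA_of_isGround ha]

end Satisfaction

/-! ## Embeddings -/

namespace EmbKind

variable {S : Sig}

/-- The literal by which the embedding `k` translates a positive body atom. -/
def bodyLit (k : EmbKind) (b : PAtom S) : Formula S :=
  match k with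
  | .hp | .hpv => b.toFormula
  | .eb | .eh | .ebv | .ehv => b.toFormula.and b.toFormula.box

/-- The literal by which the embedding `k` translates a head atom. -/
def headLit (k : EmbKind) (h : PAtom S) : Formula S :=
  match k with
  | .hp | .eb | .hpv | .ebv => h.toFormula
  | .eh | .ehv => h.toFormula.and h.toFormula.box

/-- The quantifier-free part of the translation of a rule under the embedding `k`. -/
def ruleMatrix (k : EmbKind) (r : Rule S) : Formula S :=
  impOf (r.pos.map k.bodyLit ++ r.neg.map fun c => .not (.box c.toFormula))
    (disjOf (r.head.map k.headLit))

/-- The embedding `k` includes the positive introspection axioms. -/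
def HasPIA : EmbKind → Prop
  | .hpv | .ebv => True
  | .hp | .eb | .eh | .ehv => False

theorem mem_toTau_iff {k : EmbKind} {P : Program S} {φ : Formula S} :
    φ ∈ k.toTau P ↔ (∃ r ∈ P, φ = uclosure r.vars (k.ruleMatrix r)) ∨
      (k.HasPIA ∧ φ ∈ PIAax P) ∨ φ ∈ UNAax P := by
  cases k with
  | hp | eb | eh | ehv => exact or_congr Iff.rfl (by simp only [HasPIA, false_and, false_or])
  | hpv | ebv => exact or_assoc.trans (or_congr Iff.rfl (by simp only [HasPIA, true_and]))

end EmbKind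

section UNAPIA

variable {S : Sig} {P : Program S} {φ : Formula S}

theorem mem_unaax_iff (hsig : fullSig P) :
    φ ∈ UNAax P ↔ ∃ t t' : Term S, t.isGround ∧ t'.isGround ∧ t ≠ t' ∧
      φ = (Formula.eq t t').box.not.imp (Formula.eq t t').not := by
  simp only [UNAax, Term.isNameOf_iff_isGround hsig.1]
  rfl

theorem mem_piaax_iff (hsig : fullSig P) :
    φ ∈ PIAax P ↔ ∃ a : PAtom S, a.isGround ∧ φ = a.toFormula.imp a.toFormula.box := by
  simp only [PIAax, Term.isNameOf_iff_isGround hsig.1, hsig.2, true_and]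
  rfl

end UNAPIA

/-! ## Herbrand models of an embedding -/

namespace EmbKind

variable {S : Sig} {X : Sem} {w : Interp S} {Γ : Set (Formula S)} {B : ℕ → w.U}
  {k : EmbKind} {P : Program S} {G M : Set (PAtom S)} {r : Rule S} {σ : ℕ → Term S} {a : PAtom S}

/-- The ground atoms whose body literals are true when the atoms in `M` are true and those in `G`
are believed. -/
def bodyAtoms (k : EmbKind) (G M : Set (PAtom S)) : Set (PAtom S) :=
  match k with
  | .hp | .hpv => M
  | .eb | .eh | .ebv | .ehv => M ∩ G

/-- The ground atoms whose head literals are true when the atoms in `M` are true and those in `G`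
are believed. -/
def headAtoms (k : EmbKind) (G M : Set (PAtom S)) : Set (PAtom S) :=
  match k with
  | .hp | .eb | .hpv | .ebv => M
  | .eh | .ehv => M ∩ G

/-- The instance of the translation of `r` under the name substitution `σ` holds when the atoms in
`M` are true and those in `G` are believed. -/
def InstanceHolds (k : EmbKind) (G M : Set (PAtom S)) (r : Rule S) (σ : ℕ → Term S) : Prop :=
  (∀ b ∈ r.pos, b.substA σ ∈ k.bodyAtoms G M) → (∀ c ∈ r.neg, c.substA σ ∉ G) →
    ∃ h ∈ r.head, h.substA σ ∈ k.headAtoms G M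

/-- `M` is the Herbrand valuation of a model of the embedding `k` of `P` in which names denote
distinct individuals and exactly the ground atoms in `G` are believed. -/
structure HerbrandModel (k : EmbKind) (P : Program S) (G M : Set (PAtom S)) : Prop where
  isGround : ∀ a ∈ M, a.isGround
  instanceHolds : ∀ r ∈ P, ∀ σ : ℕ → Term S, (∀ x, r.hasVar x → (σ x).isGround) →
    k.InstanceHolds G M r σ
  subset_of_hasPIA : k.HasPIA → M ⊆ G

theorem sat_bodyLit (hΓ : CoreferenceClosed w Γ)
    (hσ : ∀ x, a.hasVar x → w.Denotes (σ x) (B x)) :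
    Sat X w Γ (k.bodyLit a) B ↔ a.substA σ ∈ k.bodyAtoms (believedAtoms Γ) w.trueAtoms := by
  cases k with
  | hp | hpv => exact sat_toFormula hσ
  | eb | eh | ebv | ehv => exact sat_toFormula_and_box hΓ hσ

theorem sat_headLit (hΓ : CoreferenceClosed w Γ)
    (hσ : ∀ x, a.hasVar x → w.Denotes (σ x) (B x)) :
    Sat X w Γ (k.headLit a) B ↔ a.substA σ ∈ k.headAtoms (believedAtoms Γ) w.trueAtoms := by
  cases k with
  | hp | eb | hpv | ebv => exact sat_toFormula hσ
  | eh | ehv => exact sat_toFormula_and_box hΓ hσ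

theorem sat_ruleMatrix (hr : r.head ≠ []) (hΓ : CoreferenceClosed w Γ)
    (hσ : ∀ x, r.hasVar x → w.Denotes (σ x) (B x)) :
    Sat X w Γ (k.ruleMatrix r) B ↔
      k.InstanceHolds (believedAtoms Γ) w.trueAtoms r σ := by
  have hatom : ∀ a ∈ r.atoms, ∀ x, a.hasVar x → w.Denotes (σ x) (B x) :=
    fun a ha x hx => hσ x ⟨a, ha, hx⟩
  simp only [Rule.atoms, List.mem_append, or_imp, forall_and] at hatom
  obtain ⟨⟨hhead, hpos⟩, hneg⟩ := hatom
  simp only [ruleMatrix, sat_impOf, sat_disjOf (List.map_eq_nil_iff.not.2 hr), List.mem_append,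
    or_imp, forall_and, List.mem_map, forall_exists_index, and_imp, forall_apply_eq_imp_iff₂,
    exists_exists_and_eq_and]
  refine imp_congr (forall₂_congr fun b hb => sat_bodyLit hΓ (hpos b hb))
    (imp_congr (forall₂_congr fun c hc => not_congr (sat_box_toFormula hΓ (hneg c hc))) ?_)
  exact exists_congr fun h => and_congr_right fun hh => sat_headLit hΓ (hhead h hh)

theorem herbrandModel_trueAtoms (hP : progWf P) (hsig : fullSig P) (hΓ : CoreferenceClosed w Γ)
    (hw : ModelsT X w Γ (k.toTau P)) : k.HerbrandModel P (believedAtoms Γ) w.trueAtoms where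
  isGround _ ha := ha.1
  instanceHolds r hr σ hσ := by
    have hmatrix := modelsF_uclosure.1 (hw _ (mem_toTau_iff.2 (.inl ⟨r, hr, rfl⟩)))
    exact (sat_ruleMatrix (hP r hr).1 hΓ fun x hx => ⟨hσ x hx, rfl⟩).1
      (hmatrix fun x => (σ x).evalG w)
  subset_of_hasPIA hk a ha := by
    have hpia := (mem_piaax_iff hsig).2 ⟨a, ha.1, rfl⟩
    exact (sat_imp_box_toFormula hΓ ha.1).1
      (hw _ (mem_toTau_iff.2 (.inr (.inl ⟨hk, hpia⟩))) fun _ => w.dflt) ha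

theorem eq_or_eq_mem_of_evalG_eq (hsig : fullSig P) (hw : ModelsT X w Γ (k.toTau P))
    {t t' : Term S} (ht : t.isGround) (ht' : t'.isGround) (h : t.evalG w = t'.evalG w) :
    t = t' ∨ Formula.eq t t' ∈ Γ := by
  by_contra! hne
  have huna := (mem_unaax_iff hsig).2 ⟨t, t', ht, ht', hne.1, rfl⟩
  have hsat := hw _ (mem_toTau_iff.2 (.inr (.inr huna))) fun _ => w.dflt
  exact sat_imp.1 hsat ((sat_box_eq ht ht').not.2 hne.2) h

end EmbKind

/-! ## Herbrand interpretations -/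

section HerbrandInterp

variable {S : Sig} {M : Set (PAtom S)} {X : Sem} {Γ : Set (Formula S)} {t : Term S}

/-- The Herbrand interpretation in which exactly the ground atoms in `M` are true. Its universe is
the set of names; without names, it is the set of all terms, since a universe must be nonempty. -/
def herbrandInterp (M : Set (PAtom S)) : Interp S where
  U := {t : Term S // t.isGround ∨ ∀ s : Term S, ¬ s.isGround}
  nonempty := by
    by_cases h : ∃ t : Term S, t.isGround
    · exact h.elim fun t ht => ⟨t, .inl ht⟩
    · exact ⟨.var 0, .inr (not_exists.1 h)⟩
  interpF f us := ⟨.func f fun i => us i, by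
    by_cases h : ∃ s : Term S, s.isGround
    · obtain ⟨s, hs⟩ := h
      exact .inl fun i => (us i).2.resolve_right fun hno => hno s hs
    · exact .inr (not_exists.1 h)⟩
  interpP p us := ⟨p, fun i => us i⟩ ∈ M

theorem coe_eval_herbrandInterp (B : ℕ → (herbrandInterp M).U) (t : Term S) :
    (t.eval (herbrandInterp M) B).1 = t.subst fun x => some (B x).1 := by
  induction t with
  | var y => rfl
  | func f ts ih => exact congrArg (Term.func f) (funext ih)

theorem coe_evalG_herbrandInterp (ht : t.isGround) : (t.evalG (herbrandInterp M)).1 = t :=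
  (coe_eval_herbrandInterp _ t).trans (Term.subst_of_isGround ht _)

theorem uniqueNames_herbrandInterp : (herbrandInterp M).UniqueNames := by
  intro t t' ht ht' h
  rw [← coe_evalG_herbrandInterp (M := M) ht, h, coe_evalG_herbrandInterp ht']

theorem trueAtoms_herbrandInterp (hM : ∀ a ∈ M, a.isGround) :
    (herbrandInterp M).trueAtoms = M := by
  ext a
  have hargs (ha : a.isGround) :
      (PAtom.mk a.p fun i => ((a.args i).evalG (herbrandInterp M)).1) = a :=
    congrArg (PAtom.mk a.p) (funext fun i => coe_evalG_herbrandInterp (ha i))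
  constructor
  · rintro ⟨ha, h⟩
    exact Set.mem_of_eq_of_mem (hargs ha).symm h
  · intro h
    exact ⟨hM a h, Set.mem_of_eq_of_mem (hargs (hM a h)) h⟩

theorem goodSig.exists_isGround {P : Program S} (hgood : goodSig P) {r : Rule S} (hr : r ∈ P)
    {x : ℕ} (hx : r.hasVar x) : ∃ t : Term S, t.isGround := by
  obtain ⟨a, ha, i, _⟩ := hx
  obtain ⟨f, _, hf⟩ := hgood ⟨a.p, ⟨r, hr, a, ha, rfl⟩, i.pos⟩
  exact ⟨.func f fun j => (hf ▸ j).elim0, fun j => (hf ▸ j).elim0⟩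

theorem EmbKind.HerbrandModel.modelsT_herbrandInterp {k : EmbKind} {P : Program S}
    (hP : progWf P) (hsig : fullSig P) (hgood : goodSig P)
    (hM : k.HerbrandModel P (believedAtoms Γ) M) : ModelsT X (herbrandInterp M) Γ (k.toTau P) := by
  have hΓ : CoreferenceClosed (herbrandInterp M) Γ := uniqueNames_herbrandInterp.coreferenceClosed Γ
  have htrue := trueAtoms_herbrandInterp hM.isGround
  intro φ hφ
  rcases mem_toTau_iff.1 hφ with ⟨r, hr, rfl⟩ | ⟨hk, hpia⟩ | huna
  · refine modelsF_uclosure.2 fun B => ?_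
    have hground : ∀ x, r.hasVar x → (B x).1.isGround := fun x hx =>
      (hgood.exists_isGround hr hx).elim fun t ht => (B x).2.resolve_right fun hno => hno t ht
    have hdenotes : ∀ x, r.hasVar x → (herbrandInterp M).Denotes (B x).1 (B x) := fun x hx =>
      ⟨hground x hx, Subtype.ext (coe_evalG_herbrandInterp (hground x hx))⟩
    exact (sat_ruleMatrix (hP r hr).1 hΓ hdenotes).2
      (htrue.symm ▸ hM.instanceHolds r hr _ hground)
  · obtain ⟨a, ha, rfl⟩ := (mem_piaax_iff hsig).1 hpia
    exact fun B => (sat_imp_box_toFormula hΓ ha).2 fun h => hM.subset_of_hasPIA hk (htrue ▸ h)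
  · obtain ⟨t, t', ht, ht', hne, rfl⟩ := (mem_unaax_iff hsig).1 huna
    refine fun B => sat_imp.2 fun _ heq => hne (uniqueNames_herbrandInterp (M := M) t t' ht ht' ?_)
    rwa [← Term.eval_of_isGround ht B, ← Term.eval_of_isGround ht' B]

end HerbrandInterp

/-! ## Objective ground formulas -/

namespace Formula

variable {S : Sig}

/-- Truth of an objective ground formula when exactly the atoms in `M` are true and distinct names
denote distinct individuals. Quantified and modal formulas get the junk value `False`. -/
def HoldsIn (M : Set (PAtom S)) : Formula S → Prop
  | atom p ts => ⟨p, ts⟩ ∈ M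
  | eq t t' => t = t'
  | not φ => ¬ φ.HoldsIn M
  | and φ ψ => φ.HoldsIn M ∧ ψ.HoldsIn M
  | ex _ _ => False
  | box _ => False

end Formula

section HoldsIn

variable {S : Sig} {X : Sem} {w : Interp S} {Γ Γ' : Set (Formula S)} {B : ℕ → w.U}
  {k : EmbKind} {P : Program S} {φ : Formula S}

theorem Interp.UniqueNames.sat_iff_holdsIn (hw : w.UniqueNames) (hobj : φ.isObjective)
    (hg : φ.isGround) : Sat X w Γ φ B ↔ φ.HoldsIn w.trueAtoms := by
  induction φ with
  | atom p ts => exact sat_toFormula_of_isGround (a := ⟨p, ts⟩) hg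
  | eq t t' =>
    simp only [Sat, Formula.HoldsIn, Term.eval_of_isGround hg.1, Term.eval_of_isGround hg.2]
    exact ⟨hw t t' hg.1 hg.2, congrArg _⟩
  | not φ ih => exact not_congr (ih hobj hg)
  | and φ ψ ihφ ihψ => exact and_congr (ihφ hobj.1 hg.1) (ihψ hobj.2 hg.2)
  | ex _ _ _ => exact hg.elim
  | box _ _ => exact hobj.elim

theorem forall_modelsF_iff_holdsIn (hP : progWf P) (hsig : fullSig P) (hgood : goodSig P)
    (hunique : ∀ w, ModelsT X w Γ (k.toTau P) → w.UniqueNames) (hobj : φ.isObjective)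
    (hg : φ.isGround) :
    (∀ w, ModelsT X w Γ (k.toTau P) → ModelsF X w Γ' φ) ↔
      ∀ M, k.HerbrandModel P (believedAtoms Γ) M → φ.HoldsIn M := by
  constructor
  · intro h M hM
    have hsat := h _ (hM.modelsT_herbrandInterp hP hsig hgood) fun _ => (herbrandInterp M).dflt
    rwa [uniqueNames_herbrandInterp.sat_iff_holdsIn hobj hg,
      trueAtoms_herbrandInterp hM.isGround] at hsat
  · intro h w hw B
    have hM := EmbKind.herbrandModel_trueAtoms hP hsig ((hunique w hw).coreferenceClosed Γ) hw
    exact ((hunique w hw).sat_iff_holdsIn hobj hg).2 (h _ hM)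

end HoldsIn

/-! ## From stable expansions to sets of ground atoms -/

namespace EmbKind

variable {S : Sig} {k : EmbKind} {P : Program S} {G : Set (PAtom S)}

/-- `G` is the set of ground atoms true in all Herbrand models relative to `G` itself. These sets
are the atomic parts of the stable expansions of the embedding `k` of `P`. -/
def IsHerbrandExpansion (k : EmbKind) (P : Program S) (G : Set (PAtom S)) : Prop :=
  ∀ a, a ∈ G ↔ a.isGround ∧ ∀ M, k.HerbrandModel P G M → a ∈ M

theorem IsHerbrandExpansion.exists_herbrandModel (hP : progWf P)
    (hG : k.IsHerbrandExpansion P G) : ∃ M, k.HerbrandModel P G M := by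
  by_contra! hno
  have mem_of_isGround {a : PAtom S} (ha : a.isGround) : a ∈ G :=
    (hG a).2 ⟨ha, fun M hM => (hno M hM).elim⟩
  have hhead : k.headAtoms G G = G := by cases k <;> simp only [headAtoms, Set.inter_self]
  refine hno G ⟨fun a ha => ((hG a).1 ha).1, fun r hr σ hσ _ _ => ?_, fun _ => subset_rfl⟩
  obtain ⟨h, hh⟩ := List.exists_mem_of_ne_nil _ (hP r hr).1
  refine ⟨h, hh, hhead.symm ▸ mem_of_isGround (Rule.isGround_substA hσ ?_)⟩
  exact List.mem_append_left _ (List.mem_append_left _ hh)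

end EmbKind

namespace StableExp

variable {S : Sig} {X : Sem} {T : Set (Formula S)} {k : EmbKind} {P : Program S} {w : Interp S}
  {φ : Formula S}

theorem mem_iff_entails {Φ : Set (Formula S)} (hT : StableExp X Φ T) :
    φ ∈ T ↔ Entails X Φ T φ :=
  Set.ext_iff.1 hT φ

theorem coreferenceClosed (hsig : fullSig P) (hT : StableExp X (k.toTau P) T)
    (hw : ModelsT X w T (k.toTau P)) : CoreferenceClosed w T := by
  intro p ts ts' u hts hts' hmem
  refine hT.mem_iff_entails.2 fun w' hw' B => ?_
  have heval (i) : (ts' i).eval w' B = (ts i).eval w' B := by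
    obtain heq | heq := EmbKind.eq_or_eq_mem_of_evalG_eq hsig hw (hts' i).1 (hts i).1
      ((hts' i).2.trans (hts i).2.symm)
    · rw [heq]
    · exact hT.mem_iff_entails.1 heq w' hw' B
  simpa only [Sat, heval] using hT.mem_iff_entails.1 hmem w' hw' B

theorem uniqueNames (hP : progWf P) (hsig : fullSig P) (hgood : goodSig P)
    (hT : StableExp X (k.toTau P) T) (hw : ModelsT X w T (k.toTau P)) : w.UniqueNames := by
  intro t t' ht ht' h
  refine (EmbKind.eq_or_eq_mem_of_evalG_eq hsig hw ht ht' h).elim id fun hmem => ?_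
  have hM := EmbKind.herbrandModel_trueAtoms hP hsig (hT.coreferenceClosed hsig hw) hw
  refine uniqueNames_herbrandInterp (M := w.trueAtoms) t t' ht ht' ?_
  exact hT.mem_iff_entails.1 hmem _ (hM.modelsT_herbrandInterp hP hsig hgood) _

theorem mem_iff_holdsIn (hP : progWf P) (hsig : fullSig P) (hgood : goodSig P)
    (hT : StableExp X (k.toTau P) T) (hobj : φ.isObjective) (hg : φ.isGround) :
    φ ∈ T ↔ ∀ M, k.HerbrandModel P (believedAtoms T) M → φ.HoldsIn M :=
  hT.mem_iff_entails.trans <|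
    forall_modelsF_iff_holdsIn hP hsig hgood (fun _ => hT.uniqueNames hP hsig hgood) hobj hg

theorem isHerbrandExpansion (hP : progWf P) (hsig : fullSig P) (hgood : goodSig P)
    (hT : StableExp X (k.toTau P) T) : k.IsHerbrandExpansion P (believedAtoms T) :=
  fun a => and_congr_right fun ha =>
    hT.mem_iff_holdsIn hP hsig hgood (φ := a.toFormula) trivial ha

end StableExp

/-! ## From sets of ground atoms to stable expansions -/

namespace Formula

variable {S : Sig} {φ ψ : Formula S} {l : List (Formula S)}

/-- The nesting depth of `𝖫`. -/
def modalDepth : Formula S → ℕ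
  | atom _ _ => 0
  | eq _ _ => 0
  | not φ => φ.modalDepth
  | and φ ψ => max φ.modalDepth ψ.modalDepth
  | ex _ φ => φ.modalDepth
  | box φ => φ.modalDepth + 1

/-- The formulas to which an outermost `𝖫` is applied: only these, instantiated by names, are looked
up in the belief set. -/
def boxArgs : Formula S → Set (Formula S)
  | atom _ _ => ∅
  | eq _ _ => ∅
  | not φ => φ.boxArgs
  | and φ ψ => φ.boxArgs ∪ ψ.boxArgs
  | ex _ φ => φ.boxArgs
  | box φ => {φ}

theorem modalDepth_subst (β : ℕ → Option (Term S)) : (φ.subst β).modalDepth = φ.modalDepth := by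
  induction φ generalizing β with
  | atom p ts => rfl
  | eq t t' => rfl
  | not _ ih => exact ih β
  | and _ _ ihφ ihψ => exact congrArg₂ max (ihφ β) (ihψ β)
  | ex _ _ ih => exact ih _
  | box _ ih => exact congrArg (· + 1) (ih β)

theorem modalDepth_lt_of_mem_boxArgs (h : ψ ∈ φ.boxArgs) : ψ.modalDepth < φ.modalDepth := by
  induction φ with
  | atom p ts => exact h.elim
  | eq t t' => exact h.elim
  | not φ ih => exact ih h
  | and φ φ' ih ih' =>
    exact h.elim (fun h => lt_max_of_lt_left (ih h)) (fun h => lt_max_of_lt_right (ih' h))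
  | ex x φ ih => exact ih h
  | box φ _ => exact (congrArg modalDepth h).trans_lt (Nat.lt_succ_self _)

theorem boxAtomic.isAtomic_of_mem_boxArgs (hφ : φ.boxAtomic) (h : ψ ∈ φ.boxArgs) :
    ψ.isAtomic := by
  induction φ with
  | atom p ts => exact h.elim
  | eq t t' => exact h.elim
  | not φ ih => exact ih hφ h
  | and φ φ' ih ih' => exact h.elim (ih hφ.1) (ih' hφ.2)
  | ex x φ ih => exact ih hφ h
  | box φ _ => exact Set.mem_singleton_iff.1 h ▸ hφ

theorem boxAtomic_andAll (hφ : φ.boxAtomic) (hl : ∀ ψ ∈ l, ψ.boxAtomic) :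
    (andAll φ l).boxAtomic := by
  induction l generalizing φ with
  | nil => exact hφ
  | cons ψ l ih => exact ih ⟨hφ, hl ψ (.head l)⟩ fun χ hχ => hl χ (.tail ψ hχ)

theorem boxAtomic_orAll (hφ : φ.boxAtomic) (hl : ∀ ψ ∈ l, ψ.boxAtomic) :
    (orAll φ l).boxAtomic := by
  induction l generalizing φ with
  | nil => exact hφ
  | cons ψ l ih => exact ih ⟨hφ, hl ψ (.head l)⟩ fun χ hχ => hl χ (.tail ψ hχ)

theorem boxAtomic_disjOf (hl : ∀ ψ ∈ l, ψ.boxAtomic) : (disjOf l).boxAtomic := by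
  cases l with
  | nil => trivial
  | cons ψ l => exact boxAtomic_orAll (hl ψ (.head l)) fun χ hχ => hl χ (.tail ψ hχ)

theorem boxAtomic_impOf (hl : ∀ ψ ∈ l, ψ.boxAtomic) (hφ : φ.boxAtomic) :
    (impOf l φ).boxAtomic := by
  cases l with
  | nil => exact hφ
  | cons ψ l => exact ⟨boxAtomic_andAll (hl ψ (.head l)) fun χ hχ => hl χ (.tail ψ hχ), hφ⟩

theorem boxAtomic_uclosure {vs : List ℕ} (hφ : φ.boxAtomic) : (uclosure vs φ).boxAtomic := by
  induction vs with
  | nil => exact hφ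
  | cons _ _ ih => exact ih

end Formula

namespace EmbKind

variable {S : Sig} {k : EmbKind} {P : Program S} {φ : Formula S}

theorem boxAtomic_bodyLit (k : EmbKind) (a : PAtom S) : (k.bodyLit a).boxAtomic := by
  cases k with
  | hp | hpv => trivial
  | eb | eh | ebv | ehv => exact ⟨trivial, trivial⟩

theorem boxAtomic_headLit (k : EmbKind) (a : PAtom S) : (k.headLit a).boxAtomic := by
  cases k with
  | hp | eb | hpv | ebv => trivial
  | eh | ehv => exact ⟨trivial, trivial⟩

theorem boxAtomic_ruleMatrix (k : EmbKind) (r : Rule S) : (k.ruleMatrix r).boxAtomic := by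
  refine Formula.boxAtomic_impOf (List.forall_mem_append.2 ⟨?_, ?_⟩) (Formula.boxAtomic_disjOf ?_)
  · exact List.forall_mem_map.2 fun b _ => k.boxAtomic_bodyLit b
  · exact List.forall_mem_map.2 fun _ _ => trivial
  · exact List.forall_mem_map.2 fun h _ => k.boxAtomic_headLit h

theorem boxAtomic_of_mem_toTau (hφ : φ ∈ k.toTau P) : φ.boxAtomic := by
  rcases mem_toTau_iff.1 hφ with ⟨r, _, rfl⟩ | ⟨_, a, _, _, rfl⟩ | ⟨t, t', _, _, _, rfl⟩
  · exact Formula.boxAtomic_uclosure (k.boxAtomic_ruleMatrix r)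
  · exact ⟨trivial, trivial⟩
  · exact ⟨trivial, trivial⟩

end EmbKind

section TheoryOf

variable {S : Sig} {X : Sem} {w : Interp S} {Γ Γ' : Set (Formula S)} {B : ℕ → w.U}
  {K : Set (Interp S)} {φ : Formula S} {k : EmbKind} {P : Program S} {G : Set (PAtom S)}

theorem sat_congr (h : ∀ ψ ∈ φ.boxArgs, ∀ β : ℕ → Option (Term S), (ψ.subst β).closed →
      (ψ.subst β ∈ Γ ↔ ψ.subst β ∈ Γ')) :
    Sat X w Γ φ B ↔ Sat X w Γ' φ B := by
  induction φ generalizing B with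
  | atom p ts => exact Iff.rfl
  | eq t t' => exact Iff.rfl
  | not φ ih => exact not_congr (ih h)
  | and φ ψ ihφ ihψ =>
    exact and_congr (ihφ fun χ hχ => h χ (.inl hχ)) (ihψ fun χ hχ => h χ (.inr hχ))
  | ex x φ ih => exact exists_congr fun u => ih h
  | box φ _ =>
    cases X with
    | any => exact exists_congr fun β => and_congr_right fun _ => and_congr_right (h φ rfl β)
    | all => exact forall₂_congr fun β _ => and_congr_right (h φ rfl β)

theorem sat_congr_of_boxAtomic (hφ : φ.boxAtomic) (hatom : believedAtoms Γ = believedAtoms Γ')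
    (heq : ∀ t t' : Term S, t.isGround → t'.isGround →
      (Formula.eq t t' ∈ Γ ↔ Formula.eq t t' ∈ Γ')) :
    Sat X w Γ φ B ↔ Sat X w Γ' φ B := by
  refine sat_congr fun ψ hψ β hclosed => ?_
  have hatomic := hφ.isAtomic_of_mem_boxArgs hψ
  cases ψ with
  | atom p ts =>
    have hg : (PAtom.mk p fun i => (ts i).subst β).isGround := fun i =>
      Term.isGround_iff_forall_not_hasVar.2 fun x hx => hclosed x ⟨i, hx⟩
    exact (and_iff_right hg).symm.trans ((Set.ext_iff.1 hatom _).trans (and_iff_right hg))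
  | eq t t' =>
    exact heq _ _ (Term.isGround_iff_forall_not_hasVar.2 fun x hx => hclosed x (.inl hx))
      (Term.isGround_iff_forall_not_hasVar.2 fun x hx => hclosed x (.inr hx))
  | not _ | and _ _ | ex _ _ | box _ => exact hatomic.elim

/-- Truth of `φ` in all interpretations in `K`, with `𝖫` read as membership in the set of theorems
themselves. Only the theorems of smaller modal depth matter for `φ`, hence the recursion. -/
def IsTheoremOf (X : Sem) (K : Set (Interp S)) (φ : Formula S) : Prop :=
  ∀ w ∈ K, ModelsF X w {ψ | ∃ _ : ψ.modalDepth < φ.modalDepth, IsTheoremOf X K ψ} φ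
termination_by φ.modalDepth

/-- The autoepistemic theory of a class of interpretations: the belief set that consists of the
formulas true in all of them relative to this belief set. -/
def theoryOf (X : Sem) (K : Set (Interp S)) : Set (Formula S) :=
  {φ | IsTheoremOf X K φ}

theorem mem_theoryOf_iff :
    φ ∈ theoryOf X K ↔ ∀ w ∈ K, ModelsF X w (theoryOf X K) φ := by
  rw [theoryOf, Set.mem_ofPred_eq, IsTheoremOf]
  refine forall₂_congr fun w _ => forall_congr' fun B => sat_congr fun ψ hψ β _ => ?_
  refine exists_prop.trans (and_iff_right ?_)
  rw [Formula.modalDepth_subst]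
  exact Formula.modalDepth_lt_of_mem_boxArgs hψ

/-- The belief set consisting of the atoms in `G` and the trivial equations. -/
def atomicTheory (G : Set (PAtom S)) : Set (Formula S) :=
  {φ | (∃ a ∈ G, φ = a.toFormula) ∨ ∃ t, φ = Formula.eq t t}

theorem toFormula_mem_atomicTheory {a : PAtom S} : a.toFormula ∈ atomicTheory G ↔ a ∈ G := by
  constructor
  · rintro (⟨b, hb, h⟩ | ⟨t, h⟩)
    · exact PAtom.toFormula_injective h ▸ hb
    · cases h
  · exact fun ha => .inl ⟨a, ha, rfl⟩

theorem eq_mem_atomicTheory {t t' : Term S} : Formula.eq t t' ∈ atomicTheory G ↔ t = t' := by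
  constructor
  · rintro (⟨b, _, h⟩ | ⟨s, h⟩)
    · cases h
    · exact (Formula.eq.inj h).1.trans (Formula.eq.inj h).2.symm
  · rintro rfl
    exact .inr ⟨t, rfl⟩

theorem believedAtoms_atomicTheory (hG : ∀ a ∈ G, a.isGround) :
    believedAtoms (atomicTheory G) = G :=
  Set.ext fun a => (and_congr_right' toFormula_mem_atomicTheory).trans
    (and_iff_right_of_imp (hG a))

theorem uniqueNames_of_modelsT_atomicTheory (hsig : fullSig P)
    (hw : ModelsT X w (atomicTheory G) (k.toTau P)) : w.UniqueNames := fun _ _ ht ht' h =>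
  (EmbKind.eq_or_eq_mem_of_evalG_eq hsig hw ht ht' h).elim id eq_mem_atomicTheory.1

namespace EmbKind.IsHerbrandExpansion

theorem exists_stableExp (hP : progWf P) (hsig : fullSig P) (hgood : goodSig P) (X : Sem)
    (hG : k.IsHerbrandExpansion P G) :
    ∃ T, StableExp X (k.toTau P) T ∧ believedAtoms T = G := by
  have hground : ∀ a ∈ G, a.isGround := fun a ha => ((hG a).1 ha).1
  set T := theoryOf X {w | ModelsT X w (atomicTheory G) (k.toTau P)}
  have mem_iff_holdsIn {φ : Formula S} (hobj : φ.isObjective) (hg : φ.isGround) :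
      φ ∈ T ↔ ∀ M, k.HerbrandModel P G M → φ.HoldsIn M := by
    refine mem_theoryOf_iff.trans <| (forall_modelsF_iff_holdsIn hP hsig hgood
      (fun _ => uniqueNames_of_modelsT_atomicTheory hsig) hobj hg).trans ?_
    rw [believedAtoms_atomicTheory hground]
  have hatom : believedAtoms T = G := Set.ext fun a =>
    (and_congr_right fun ha => mem_iff_holdsIn (φ := a.toFormula) trivial ha).trans (hG a).symm
  have hmodels (w : Interp S) :
      ModelsT X w (atomicTheory G) (k.toTau P) ↔ ModelsT X w T (k.toTau P) := by
    refine forall₂_congr fun φ hφ => forall_congr' fun B =>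
      sat_congr_of_boxAtomic (boxAtomic_of_mem_toTau hφ) ?_ fun t t' ht ht' => ?_
    · rw [hatom, believedAtoms_atomicTheory hground]
    · obtain ⟨M, hM⟩ := hG.exists_herbrandModel hP
      rw [eq_mem_atomicTheory, mem_iff_holdsIn (φ := .eq t t') trivial ⟨ht, ht'⟩]
      exact ⟨fun h _ _ => h, fun h => h M hM⟩
  refine ⟨T, Set.ext fun φ => mem_theoryOf_iff.trans (forall_congr' fun w => ?_), hatom⟩
  exact imp_congr_left (hmodels w)

end EmbKind.IsHerbrandExpansion

theorem mem_cnOg_toTau_iff (hP : progWf P) (hsig : fullSig P) (hgood : goodSig P) :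
    φ ∈ CnOg X (k.toTau P) ↔ (φ.isObjective ∧ φ.isGround) ∧
      ∀ G, k.IsHerbrandExpansion P G → ∀ M, k.HerbrandModel P G M → φ.HoldsIn M := by
  refine and_comm.trans (and_congr_right fun ⟨hobj, hg⟩ => ⟨fun h G hG => ?_, fun h T hT => ?_⟩)
  · obtain ⟨T, hT, rfl⟩ := hG.exists_stableExp hP hsig hgood X
    exact (hT.mem_iff_holdsIn hP hsig hgood hobj hg).1 (h T hT)
  · exact (hT.mem_iff_holdsIn hP hsig hgood hobj hg).2
      (h _ (hT.isHerbrandExpansion hP hsig hgood))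

end TheoryOf

/-! ## Normal programs -/

namespace EmbKind

variable {S : Sig} {k k' : EmbKind} {P : Program S} {G M : Set (PAtom S)}

theorem bodyAtoms_of_subset (k : EmbKind) (h : M ⊆ G) : k.bodyAtoms G M = M := by
  cases k <;> simp only [bodyAtoms, Set.inter_eq_left.2 h]

theorem headAtoms_of_subset (k : EmbKind) (h : M ⊆ G) : k.headAtoms G M = M := by
  cases k <;> simp only [headAtoms, Set.inter_eq_left.2 h]

theorem inter_subset_bodyAtoms (k : EmbKind) (G M : Set (PAtom S)) :
    M ∩ G ⊆ k.bodyAtoms G M := by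
  cases k <;> simp only [bodyAtoms, Set.inter_subset_left, subset_rfl]

theorem headAtoms_subset (k : EmbKind) (G M : Set (PAtom S)) : k.headAtoms G M ⊆ M := by
  cases k <;> simp only [headAtoms, Set.inter_subset_left, subset_rfl]

theorem HerbrandModel.mono (h : k'.HerbrandModel P G M) (hpia : k.HasPIA → k'.HasPIA)
    (hbody : k.bodyAtoms G M ⊆ k'.bodyAtoms G M) (hhead : k'.headAtoms G M ⊆ k.headAtoms G M) :
    k.HerbrandModel P G M where
  isGround := h.isGround
  instanceHolds r hr σ hσ hpos hneg :=
    (h.instanceHolds r hr σ hσ (fun b hb => hbody (hpos b hb)) hneg).imp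
      fun _ hd => ⟨hd.1, hhead hd.2⟩
  subset_of_hasPIA hk := h.subset_of_hasPIA (hpia hk)

theorem HerbrandModel.of_subset (h : k'.HerbrandModel P G M) (hMG : M ⊆ G) :
    k.HerbrandModel P G M where
  isGround := h.isGround
  instanceHolds r hr σ hσ := by
    have hr' := h.instanceHolds r hr σ hσ
    simp only [InstanceHolds, bodyAtoms_of_subset _ hMG, headAtoms_of_subset _ hMG] at hr' ⊢
    exact hr'
  subset_of_hasPIA _ := hMG

theorem HerbrandModel.substA_mem_headAtoms (hM : k.HerbrandModel P G M) {r : Rule S} (hr : r ∈ P)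
    {h : PAtom S} (hhead : r.head = [h]) {σ : ℕ → Term S}
    (hσ : ∀ x, r.hasVar x → (σ x).isGround) (hpos : ∀ b ∈ r.pos, b.substA σ ∈ k.bodyAtoms G M)
    (hneg : ∀ c ∈ r.neg, c.substA σ ∉ G) : h.substA σ ∈ k.headAtoms G M := by
  obtain ⟨d, hd, hdM⟩ := hM.instanceHolds r hr σ hσ hpos hneg
  rw [hhead, List.mem_singleton] at hd
  exact hd ▸ hdM

theorem IsHerbrandExpansion.herbrandModel_self (hnormal : progNormal P)
    (hG : k.IsHerbrandExpansion P G) : hpv.HerbrandModel P G G := by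
  suffices h : k.HerbrandModel P G G from h.of_subset subset_rfl
  refine ⟨fun a ha => ((hG a).1 ha).1, fun r hr σ hσ hpos hneg => ?_, fun _ => subset_rfl⟩
  obtain ⟨h, hhead⟩ := List.length_eq_one_iff.1 (hnormal r hr)
  rw [bodyAtoms_of_subset _ subset_rfl] at hpos
  have hground : (h.substA σ).isGround := Rule.isGround_substA hσ <| by
    simp only [Rule.atoms, hhead, List.cons_append, List.mem_cons, true_or]
  have hmem : h.substA σ ∈ G := (hG _).2 ⟨hground, fun M hM => by
    have hGM : G ⊆ M := fun a ha => ((hG a).1 ha).2 M hM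
    exact k.headAtoms_subset G M <| hM.substA_mem_headAtoms hr hhead hσ
      (fun b hb => k.inter_subset_bodyAtoms G M ⟨hGM (hpos b hb), hpos b hb⟩) hneg⟩
  refine ⟨h, hhead ▸ List.mem_singleton_self h, ?_⟩
  rwa [headAtoms_of_subset _ subset_rfl]

theorem HerbrandModel.inter (hnormal : progNormal P) (hM : k.HerbrandModel P G M)
    (hG : hpv.HerbrandModel P G G) : hpv.HerbrandModel P G (M ∩ G) where
  isGround a ha := hM.isGround a ha.1
  instanceHolds r hr σ hσ hpos hneg := by
    obtain ⟨h, hhead⟩ := List.length_eq_one_iff.1 (hnormal r hr)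
    have htrue := hM.substA_mem_headAtoms hr hhead hσ
      (fun b hb => k.inter_subset_bodyAtoms G M (hpos b hb)) hneg
    have hbelieved := hG.substA_mem_headAtoms hr hhead hσ (fun b hb => (hpos b hb).2) hneg
    exact ⟨h, hhead ▸ List.mem_singleton_self h, k.headAtoms_subset G M htrue, hbelieved⟩
  subset_of_hasPIA _ := Set.inter_subset_right

theorem HerbrandModel.eh_of_eb (hnormal : progNormal P) (hM : eb.HerbrandModel P G M)
    (hG : hpv.HerbrandModel P G G) : eh.HerbrandModel P G M where
  isGround := hM.isGround
  instanceHolds r hr σ hσ hpos hneg := by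
    obtain ⟨h, hhead⟩ := List.length_eq_one_iff.1 (hnormal r hr)
    have htrue := hM.substA_mem_headAtoms hr hhead hσ hpos hneg
    have hbelieved := hG.substA_mem_headAtoms hr hhead hσ (fun b hb => (hpos b hb).2) hneg
    exact ⟨h, hhead ▸ List.mem_singleton_self h, htrue, hbelieved⟩
  subset_of_hasPIA := False.elim

theorem isHerbrandExpansion_iff_isLeast (hnormal : progNormal P) :
    k.IsHerbrandExpansion P G ↔ IsLeast {M | hpv.HerbrandModel P G M} G := by
  constructor
  · refine fun hG => ⟨hG.herbrandModel_self hnormal, fun M hM a ha => ?_⟩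
    exact ((hG a).1 ha).2 M (hM.of_subset (hM.subset_of_hasPIA trivial))
  · rintro ⟨hG, hleast⟩ a
    refine ⟨fun ha => ⟨hG.isGround a ha, fun M hM => (hleast (hM.inter hnormal hG) ha).1⟩, ?_⟩
    exact fun ha => ha.2 G (hG.of_subset subset_rfl)

variable {X : Sem}

theorem cnOg_toTau_subset (hP : progWf P) (hnormal : progNormal P) (hsig : fullSig P)
    (hgood : goodSig P)
    (h : ∀ G M, hpv.HerbrandModel P G G → k'.HerbrandModel P G M → k.HerbrandModel P G M) :
    CnOg X (k.toTau P) ⊆ CnOg X (k'.toTau P) := by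
  intro φ hφ
  rw [mem_cnOg_toTau_iff hP hsig hgood] at hφ ⊢
  refine ⟨hφ.1, fun G hG M hM => ?_⟩
  have hleast := (isHerbrandExpansion_iff_isLeast hnormal).1 hG
  exact hφ.2 G ((isHerbrandExpansion_iff_isLeast hnormal).2 hleast) M (h G M hleast.1 hM)

end EmbKind

theorem EmbRel.cnOg_toTau_subset {S : Sig} {X : Sem} {P : Program S} {i j : EmbKind}
    (hij : EmbRel i j) (hP : progWf P) (hnormal : progNormal P) (hsig : fullSig P)
    (hgood : goodSig P) : CnOg X (i.toTau P) ⊆ CnOg X (j.toTau P) := by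
  refine EmbKind.cnOg_toTau_subset hP hnormal hsig hgood fun G M hG hM => ?_
  simp only [EmbRel, List.mem_cons, Prod.mk.injEq, List.not_mem_nil, or_false] at hij
  rcases hij with ⟨rfl, rfl⟩ | ⟨rfl, rfl⟩ | ⟨rfl, rfl⟩ | ⟨rfl, rfl⟩ | ⟨rfl, rfl⟩ | ⟨rfl, rfl⟩ |
    ⟨rfl, rfl⟩ | ⟨rfl, rfl⟩
  · exact hM.mono id subset_rfl subset_rfl
  · exact hM.mono id subset_rfl subset_rfl
  · exact hM.eh_of_eb hnormal hG
  · exact hM.mono id subset_rfl Set.inter_subset_left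
  · exact hM.of_subset (hM.subset_of_hasPIA trivial)
  · exact hM.of_subset (hM.subset_of_hasPIA trivial)
  · exact hM.mono id Set.inter_subset_left subset_rfl
  · exact hM.of_subset (hM.subset_of_hasPIA trivial)

/-! ## Strictness -/

/-- The position of the embedding `k` in the order generated by `EmbRel`, which is total up to
equivalence. -/
def EmbKind.level : EmbKind → ℕ
  | .ehv | .eh | .eb => 0
  | .hp => 1
  | .hpv | .ebv => 2

theorem reflTransGen_embRel_of_level_le {i j : EmbKind} (h : i.level ≤ j.level) :
    Relation.ReflTransGen EmbRel i j := by
  let rep : ℕ → EmbKind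
    | 0 => .eb
    | 1 => .hp
    | _ + 2 => .hpv
  have hto (k : EmbKind) : Relation.ReflTransGen EmbRel k (rep k.level) := by
    cases k with
    | eb | hp | hpv => exact .refl
    | eh | ebv => exact .single (by simp [EmbRel, rep, EmbKind.level])
    | ehv =>
      have hstep : EmbRel .ehv .eh := by simp [EmbRel]
      exact .head hstep (.single (by simp [EmbRel, rep, EmbKind.level]))
  have hfrom (k : EmbKind) : Relation.ReflTransGen EmbRel (rep k.level) k := by
    cases k with
    | eb | hp | hpv => exact .refl
    | eh | ebv => exact .single (by simp [EmbRel, rep, EmbKind.level])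
    | ehv =>
      have hstep : EmbRel .eh .ehv := by simp [EmbRel]
      exact .tail (.single (by simp [EmbRel, rep, EmbKind.level])) hstep
  have hsucc (n : ℕ) : Relation.ReflTransGen EmbRel (rep n) (rep (n + 1)) := by
    match n with
    | 0 | 1 => exact .single (by simp [EmbRel, rep])
    | _ + 2 => exact .refl
  exact (hto i).trans ((Nat.rel_of_forall_rel_succ_of_le _ hsucc h).trans (hfrom j))

namespace PropRule

/-- The signature with the two propositional atoms `p` and `q`, encoded as `true` and `false`. -/
def sig : Sig := ⟨Empty, Bool, Empty.elim, fun _ => 0⟩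

/-- The propositional atoms of `PropRule.sig`. -/
def atom (b : Bool) : PAtom sig := ⟨b, Fin.elim0⟩

/-- The program `p ← q`. -/
def program : Program sig := {⟨[atom true], [atom false], [], []⟩}

theorem progWf_program : progWf program := by
  rintro r rfl
  refine ⟨List.cons_ne_nil _ _, ?_⟩
  rintro x ⟨a, _, i, _⟩
  exact i.elim0

theorem progNormal_program : progNormal program := by
  rintro r rfl
  rfl

theorem fullSig_program : fullSig program := by
  refine ⟨Empty.rec, fun b => ⟨_, rfl, atom b, ?_, rfl⟩⟩
  cases b <;> simp [Rule.atoms]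

theorem goodSig_program : goodSig program :=
  fun ⟨_, _, h⟩ => (lt_irrefl 0 h).elim

theorem isGround_atom (a : PAtom sig) : a.isGround :=
  fun i => i.elim0

variable {k : EmbKind} {G M : Set (PAtom sig)} {X : Sem}

theorem herbrandModel_iff :
    k.HerbrandModel program G M ↔
      (atom false ∈ k.bodyAtoms G M → atom true ∈ k.headAtoms G M) ∧ (k.HasPIA → M ⊆ G) := by
  have hinst (σ : ℕ → Term sig) :
      k.InstanceHolds G M ⟨[atom true], [atom false], [], []⟩ σ ↔
        (atom false ∈ k.bodyAtoms G M → atom true ∈ k.headAtoms G M) := by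
    simp only [EmbKind.InstanceHolds, List.mem_singleton, forall_eq, List.not_mem_nil,
      IsEmpty.forall_iff, implies_true, true_imp_iff, exists_eq_left,
      PAtom.substA_of_isGround (isGround_atom _)]
  constructor
  · intro h
    refine ⟨(hinst Term.var).1 (h.instanceHolds _ rfl _ ?_), h.subset_of_hasPIA⟩
    exact fun _ ⟨_, _, i, _⟩ => i.elim0
  · rintro ⟨hrule, hpia⟩
    refine ⟨fun a _ => isGround_atom a, ?_, hpia⟩
    rintro r rfl σ _
    exact (hinst σ).2 hrule

theorem isHerbrandExpansion_iff : k.IsHerbrandExpansion program G ↔ G = ∅ := by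
  have hempty (G) : EmbKind.hpv.HerbrandModel program G ∅ :=
    herbrandModel_iff.2 ⟨False.elim, fun _ => Set.empty_subset G⟩
  rw [EmbKind.isHerbrandExpansion_iff_isLeast progNormal_program]
  constructor
  · exact fun hG => Set.subset_empty_iff.1 (hG.2 (hempty G))
  · rintro rfl
    exact ⟨hempty ∅, fun M _ => Set.empty_subset M⟩

theorem herbrandModel_empty_iff :
    k.HerbrandModel program ∅ M ↔
      (1 ≤ k.level → atom false ∈ M → atom true ∈ M) ∧ (2 ≤ k.level → M = ∅) := by
  rw [herbrandModel_iff]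
  cases k <;> simp +contextual [EmbKind.bodyAtoms, EmbKind.headAtoms, EmbKind.HasPIA, EmbKind.level]

theorem mem_cnOg_iff {φ : Formula sig} (hobj : φ.isObjective) (hg : φ.isGround) :
    φ ∈ CnOg X (k.toTau program) ↔ ∀ M, k.HerbrandModel program ∅ M → φ.HoldsIn M := by
  rw [mem_cnOg_toTau_iff progWf_program fullSig_program goodSig_program,
    and_iff_right (And.intro hobj hg)]
  simp only [isHerbrandExpansion_iff, forall_eq]

theorem imp_mem_cnOg_iff :
    (atom false).toFormula.imp (atom true).toFormula ∈ CnOg X (k.toTau program) ↔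
      1 ≤ k.level := by
  have holdsIn_iff (M) : ((atom false).toFormula.imp (atom true).toFormula).HoldsIn M ↔
      (atom false ∈ M → atom true ∈ M) := not_and_not_right
  have hobj : ((atom false).toFormula.imp (atom true).toFormula).isObjective := ⟨trivial, trivial⟩
  rw [mem_cnOg_iff hobj ⟨isGround_atom _, isGround_atom _⟩]
  simp only [herbrandModel_empty_iff, holdsIn_iff]
  constructor
  · intro h
    by_contra hk
    have hmem : atom true = atom false :=
      h {atom false} ⟨fun h => absurd h hk, fun h => absurd (one_le_two.trans h) hk⟩ rfl
    exact Bool.noConfusion (congrArg PAtom.p hmem)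
  · exact fun hk M hM => hM.1 hk

theorem neg_mem_cnOg_iff :
    (atom false).toFormula.not ∈ CnOg X (k.toTau program) ↔ 2 ≤ k.level := by
  have holdsIn_iff (M) : (atom false).toFormula.not.HoldsIn M ↔ atom false ∉ M := Iff.rfl
  have hobj : (atom false).toFormula.not.isObjective := trivial
  rw [mem_cnOg_iff hobj (isGround_atom _)]
  simp only [herbrandModel_empty_iff, holdsIn_iff]
  constructor
  · intro h
    by_contra hk
    exact h Set.univ ⟨fun _ _ => Set.mem_univ _, fun h => absurd h hk⟩ (Set.mem_univ _)
  · exact fun hk M hM => hM.2 hk ▸ Set.notMem_empty _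

theorem not_cnOg_subset_of_level_lt {i j : EmbKind} (h : j.level < i.level) :
    ¬ CnOg X (i.toTau program) ⊆ CnOg X (j.toTau program) := by
  intro hsub
  have himp : 1 ≤ j.level := imp_mem_cnOg_iff.1 (hsub (imp_mem_cnOg_iff.2 (Nat.one_le_of_lt h)))
  have hnot : 2 ≤ j.level := neg_mem_cnOg_iff.1 (hsub (neg_mem_cnOg_iff.2 (himp.trans_lt h)))
  have hi : i.level ≤ 2 := by cases i <;> decide
  exact absurd (hnot.trans_lt h) hi.not_gt

end PropRule

/-- Inclusions between objective ground consequence sets,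
with completeness: the stated relations hold for every normal program, and for
every pair of embeddings for which no inclusion follows from them by reflexivity
and transitivity, there is a normal program for which the inclusion fails. -/
theorem stmt13 (X : Sem) :
    (∀ (S : Sig) (P : Program S), progWf P → progNormal P → fullSig P → goodSig P →
        CnOg X (tauEHv P) = CnOg X (tauEH P) ∧
        CnOg X (tauEH P) = CnOg X (tauEB P) ∧
        CnOg X (tauEBv P) = CnOg X (tauHPv P) ∧
        CnOg X (tauEB P) ⊆ CnOg X (tauHP P) ∧
        CnOg X (tauHP P) ⊆ CnOg X (tauHPv P)) ∧
    (∀ i j : EmbKind, ¬ Relation.ReflTransGen EmbRel i j →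
      ∃ (S : Sig) (P : Program S), progWf P ∧ progNormal P ∧ fullSig P ∧ goodSig P ∧
        ¬ CnOg X (EmbKind.toTau i P) ⊆ CnOg X (EmbKind.toTau j P)) := by
  constructor
  · intro S P hP hnormal hsig hgood
    have hsub {i j : EmbKind} (hij : EmbRel i j) : CnOg X (i.toTau P) ⊆ CnOg X (j.toTau P) :=
      hij.cnOg_toTau_subset hP hnormal hsig hgood
    have heq {i j : EmbKind} (hij : EmbRel i j) (hji : EmbRel j i) :
        CnOg X (i.toTau P) = CnOg X (j.toTau P) := (hsub hij).antisymm (hsub hji)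
    refine ⟨heq (i := .ehv) (j := .eh) ?_ ?_, heq (i := .eh) (j := .eb) ?_ ?_,
      heq (i := .ebv) (j := .hpv) ?_ ?_, hsub (i := .eb) (j := .hp) ?_,
      hsub (i := .hp) (j := .hpv) ?_⟩ <;> simp [EmbRel]
  · intro i j hij
    have hlevel : j.level < i.level := not_le.1 (mt reflTransGen_embRel_of_level_le hij)
    exact ⟨PropRule.sig, PropRule.program, PropRule.progWf_program, PropRule.progNormal_program,
      PropRule.fullSig_program, PropRule.goodSig_program,
      PropRule.not_cnOg_subset_of_level_lt hlevel⟩
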